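/- Assume (Σ_n, T, (φ_n)) satisfies property (H*), that there exists an invariant sequence (μ_k) of Borel probability measures (ℒ*_k(μ_{k+1}) = μ_k for all k ∈ ℕ₀), and that the integers n_k can be chosen so that sup_k t_k < 1. Then for every k ∈ ℕ₀ and every Lipschitz (with respect to d_r) function f : Σ_k → ℝ, one has ‖ℒ^n_k(f) − ∫ f dμ_k‖_∞ → 0 as n → ∞. -/

import Mathlib

open MeasureTheory Real Filter

namespace NSShift

/-- The ambient sequence space `ℕ^ℕ`. -/
abbrev Seq := ℕ → ℕ

/-- The shift map `T`. -/
def shift (x : Seq) : Seq := fun i => x (i + 1)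

/-- Prepend one symbol to a sequence. -/
def cons (a : ℕ) (x : Seq) : Seq := fun i =>
  match i with
  | 0 => a
  | j + 1 => x j

/-- The non-stationary shift space `Σ_n` determined by alphabets `W` and
transition relations `A` (`A n i j` means `α^n_{ij} = 1`). -/
def Sig (W : ℕ → Set ℕ) (A : ℕ → ℕ → ℕ → Prop) (n : ℕ) : Set Seq :=
  {x | (∀ i, x i ∈ W (n + i)) ∧ ∀ i, A (n + i) (x i) (x (i + 1))}

/-- `x` and `y` agree in their first `k` coordinates (lie in a common `k`-cylinder). -/
def agrees (x y : Seq) (k : ℕ) : Prop := ∀ i < k, x i = y i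

open scoped Classical in
/-- The shift metric `d_r(x,y) = r^{min{i : x_i ≠ y_i}}`. -/
noncomputable def dr (r : ℝ) (x y : Seq) : ℝ :=
  if x = y then 0 else r ^ sInf {i | x i ≠ y i}

/-- `f` is locally `(r,m)`-Hölder continuous with Hölder constant `κ` of index `m` on `S`:
`V_k(f) ≤ κ r^k` for all `k ≥ m`. -/
def HolderOn (S : Set Seq) (r κ : ℝ) (m : ℕ) (f : Seq → ℝ) : Prop :=
  ∀ k, m ≤ k → ∀ x ∈ S, ∀ y ∈ S, agrees x y k → |f x - f y| ≤ κ * r ^ k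

/-- The Birkhoff sum `S_n(φ_k) = Σ_{i=0}^{n-1} φ_{k+i} ∘ T^i`. -/
noncomputable def birkhoff (φ : ℕ → Seq → ℝ) (k n : ℕ) (x : Seq) : ℝ :=
  ∑ i ∈ Finset.range n, φ (k + i) (shift^[i] x)

/-- `log B_m = Σ_{i=1}^{m} κ_{m−i} r^i`. -/
noncomputable def logB (κ : ℕ → ℝ) (r : ℝ) (m : ℕ) : ℝ :=
  ∑ i ∈ Finset.Icc 1 m, κ (m - i) * r ^ i

/-- `B_m = exp Σ_{i=1}^{m} κ_{m−i} r^i`. -/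
noncomputable def Bconst (κ : ℕ → ℝ) (r : ℝ) (m : ℕ) : ℝ := Real.exp (logB κ r m)


open scoped Classical in
/-- The Ruelle operator `ℒ_k(f)(x) = Σ_{Ty=x} e^{φ_k(y)} f(y)`, for `x ∈ Σ_{k+1}`. -/
noncomputable def Ruelle (W : ℕ → Set ℕ) (A : ℕ → ℕ → ℕ → Prop) (φ : ℕ → Seq → ℝ)
    (k : ℕ) (f : Seq → ℝ) (x : Seq) : ℝ :=
  ∑' a : ℕ, if cons a x ∈ Sig W A k then Real.exp (φ k (cons a x)) * f (cons a x) else 0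

/-- The iterated Ruelle operator `ℒ^n_k = ℒ_{k+n-1} ∘ ⋯ ∘ ℒ_k`. -/
noncomputable def RuelleIter (W : ℕ → Set ℕ) (A : ℕ → ℕ → ℕ → Prop) (φ : ℕ → Seq → ℝ)
    (k : ℕ) : ℕ → (Seq → ℝ) → Seq → ℝ
  | 0 => fun f => f
  | n + 1 => fun f => Ruelle W A φ (k + n) (RuelleIter W A φ k n f)

/-- `w` is a `k`-admissible word of length `len`. -/
def Adm (W : ℕ → Set ℕ) (A : ℕ → ℕ → ℕ → Prop) (k : ℕ) (w : ℕ → ℕ) (len : ℕ) : Prop :=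
  (∀ i < len, w i ∈ W (k + i)) ∧ ∀ i, i + 1 < len → A (k + i) (w i) (w (i + 1))

/-- Prepend the first `len` symbols of `w` to the sequence `x` (the inverse branch `τ_w`). -/
def prepend (w : ℕ → ℕ) (len : ℕ) (x : Seq) : Seq := fun i =>
  if i < len then w i else x (i - len)

/-- The Lipschitz constant of `f` on `S` with respect to the distance function `d`,
as the least constant `K ≥ 0` with `|f x − f y| ≤ K d(x,y)` on `S`. -/
noncomputable def LipC (S : Set Seq) (d : Seq → Seq → ℝ) (f : Seq → ℝ) : ℝ :=
  sInf {K : ℝ | 0 ≤ K ∧ ∀ x ∈ S, ∀ y ∈ S, |f x - f y| ≤ K * d x y}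

/-- The Vasershtein (Wasserstein) distance of two Borel measures with respect to the
cost function `d`, as the infimum of `∫ d dm` over couplings `m`. -/
noncomputable def Wass (d : Seq → Seq → ℝ) (μ ν : Measure Seq) : ℝ :=
  sInf {t : ℝ | ∃ m : Measure (Seq × Seq),
    m.map Prod.fst = μ ∧ m.map Prod.snd = ν ∧ t = ∫ p, d p.1 p.2 ∂m}

/-- The dual Ruelle operator `ℒ^*_k` on Borel measures, satisfying
`∫ f d(ℒ^*_k μ) = ∫ ℒ_k(f) dμ`. -/
noncomputable def dualRuelle (W : ℕ → Set ℕ) (A : ℕ → ℕ → ℕ → Prop) (φ : ℕ → Seq → ℝ)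
    (k : ℕ) (μ : Measure Seq) : Measure Seq :=
  Measure.sum fun a : ℕ =>
    (μ.withDensity fun x =>
      ENNReal.ofReal ((Sig W A k).indicator (fun y => Real.exp (φ k y)) (cons a x))).map (cons a)

/-- The iterated dual operator `(ℒ^n_k)^* = ℒ^*_k ∘ ⋯ ∘ ℒ^*_{k+n-1}`. -/
noncomputable def dualRuelleIter (W : ℕ → Set ℕ) (A : ℕ → ℕ → ℕ → Prop) (φ : ℕ → Seq → ℝ) :
    (k : ℕ) → ℕ → Measure Seq → Measure Seq
  | _, 0, μ => μ
  | k, n + 1, μ => dualRuelle W A φ k (dualRuelleIter W A φ (k + 1) n μ)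

/-- A non-stationary shift space `((Σ_n), T, (φ_n))` satisfying property `(H*)`, together
with the choices of the constants `β`, `n_k`, base letters `o_k`, mixing times `m_k`,
connecting words `u(x)` and lower bounds `C_k` used in the coupling construction. -/
structure HstarSystem where
  /-- the alphabets `𝒲¹_n` -/
  W : ℕ → Set ℕ
  /-- the transition matrices: `A n i j` iff `α^n_{ij} = 1` -/
  A : ℕ → ℕ → ℕ → Prop
  /-- the potentials `φ_n : Σ_n → ℝ` -/
  φ : ℕ → Seq → ℝ
  /-- the Hölder parameter -/
  r : ℝ
  /-- the parameter `β ∈ (0,1)` -/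
  β : ℝ
  /-- the Hölder constants `κ_n` of `φ_n` -/
  κ : ℕ → ℝ
  /-- the finite set `ℐ` from the big preimages property -/
  I : Finset ℕ
  /-- the infinite set `𝒦` from the big preimages property -/
  K : Set ℕ
  /-- the base letters `o_k ∈ 𝒲¹_k` -/
  o : ℕ → ℕ
  /-- the integers `n_k` -/
  nseq : ℕ → ℕ
  /-- the mixing times `m_k` -/
  mseq : ℕ → ℕ
  /-- the connecting words `u(x) ∈ 𝒲^{m_k}_k` (as sequences; only the first `m_k`
  symbols are relevant) -/
  u : ℕ → Seq → Seq
  /-- the constants `C_k` -/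
  Cseq : ℕ → ℝ
  hr : 0 < r ∧ r < 1
  hβ : 0 < β ∧ β < 1
  κnonneg : ∀ n, 0 ≤ κ n
  hKinf : K.Infinite
  /-- no zero rows -/
  row : ∀ n, ∀ i ∈ W n, ∃ j ∈ W (n + 1), A n i j
  /-- no zero columns -/
  col : ∀ n, ∀ i ∈ W (n + 1), ∃ j ∈ W n, A n j i
  /-- topological mixing -/
  mixing : ∀ k : ℕ, ∀ a ∈ W k, ∀ b : ℕ, ∃ N : ℕ, ∀ n, N ≤ n → b ∈ W (k + n) →
    ∃ x ∈ Sig W A k, x 0 = a ∧ x n = b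
  /-- big preimages along `𝒦` -/
  bigPre : ∀ n ∈ K, 1 ≤ n → ∀ a ∈ W n, ∃ b ∈ I, (b : ℕ) ∈ W (n - 1) ∧ A (n - 1) b a
  /-- `ℒ_n(1) = 1` -/
  normalized : ∀ k, ∀ x ∈ Sig W A (k + 1), Ruelle W A φ k (fun _ => 1) x = 1
  /-- `φ_n` is locally `(r,2)`-Hölder for `n ∉ 𝒦` -/
  holder2 : ∀ n ∉ K, HolderOn (Sig W A n) r (κ n) 2 (φ n)
  /-- `φ_n` is locally `(r,1)`-Hölder for `n ∈ 𝒦` -/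
  holder1 : ∀ n ∈ K, HolderOn (Sig W A n) r (κ n) 1 (φ n)
  ho : ∀ k, o k ∈ W k
  /-- `n_k ≥ ⌊−log α_k / log r⌋ + 1` where `α_k = B_k/β` -/
  hn : ∀ k, (⌊-Real.log (Bconst κ r k / β) / Real.log r⌋ + 1 : ℤ) ≤ (nseq k : ℤ)
  /-- `m_k ≥ 1`, `k + m_k ∈ 𝒦` -/
  hm_mem : ∀ k, 1 ≤ mseq k ∧ k + mseq k ∈ K
  /-- `(A_k ⋯ A_{k+m_k−2})_{o_k j} ≥ 1` for all `j ∈ ℐ ∩ 𝒲¹_{k+m_k−1}` -/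
  hm_conn : ∀ k, ∀ j ∈ I, (j : ℕ) ∈ W (k + mseq k - 1) →
    ∃ w : ℕ → ℕ, Adm W A k w (mseq k) ∧ w 0 = o k ∧ w (mseq k - 1) = j
  /-- minimality of `m_k` -/
  hm_min : ∀ k n, (1 ≤ n ∧ k + n ∈ K ∧ ∀ j ∈ I, (j : ℕ) ∈ W (k + n - 1) →
      ∃ w : ℕ → ℕ, Adm W A k w n ∧ w 0 = o k ∧ w (n - 1) = j) → mseq k ≤ n
  /-- the connecting word `u(x)` starts at `o_k`, ends in `ℐ`, and
  `x ∈ T^{m_k}([u(x)]_k)` -/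
  hu : ∀ k, ∀ x ∈ Sig W A (k + mseq k), prepend (u k x) (mseq k) x ∈ Sig W A k ∧
    u k x 0 = o k ∧ u k x (mseq k - 1) ∈ I
  hC_pos : ∀ k, 0 < Cseq k
  /-- `C_k` is a lower bound for `e^{S_{m_k} φ_k (τ_{u(x)} x)}` -/
  hC_le : ∀ k, ∀ x ∈ Sig W A (k + mseq k),
    Cseq k ≤ Real.exp (birkhoff φ k (mseq k) (prepend (u k x) (mseq k) x))

namespace HstarSystem

variable (S : HstarSystem)

/-- `α_k := B_k / β`. -/
noncomputable def alphaC (k : ℕ) : ℝ := Bconst S.κ S.r k / S.β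

/-- the metric `d̄_k(x,y) := min{1, α_k d_r(x,y)}`. -/
noncomputable def dbar (k : ℕ) (x y : Seq) : ℝ := min 1 (S.alphaC k * dr S.r x y)

/-- `s_k := 1 − (1 − r^{n_k} α_k) C_{k+n_k}/B_{k+n_k}`. -/
noncomputable def sconst (k : ℕ) : ℝ :=
  1 - (1 - S.r ^ S.nseq k * S.alphaC k) * S.Cseq (k + S.nseq k) / Bconst S.κ S.r (k + S.nseq k)

/-- `t_k := max{β, s_k}`. -/
noncomputable def tconst (k : ℕ) : ℝ := max S.β (S.sconst k)

/-- `l_k := n_k + m_{k+n_k}`. -/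
def lconst (k : ℕ) : ℕ := S.nseq k + S.mseq (k + S.nseq k)

end HstarSystem

/-!
Since `ℒ_k(1) = 1`, each `ℒ_k` averages, and the oscillation of `ℒ^n_k f` cannot grow with `n`.
Over `l_k` steps it shrinks. If `x` and `y` are close, then bounded distortion pairs their
inverse branches so well that the `d̄`-Lipschitz constant is multiplied by at most `β`. If they
are far apart, then with probability at least `C` both are reached through words starting with
the same letter, after which distortion costs only a factor `B`; this gives the factor `s_k`.
Hence every `l_k` steps multiply the `d̄`-Lipschitz constant by at most `t_k ≤ t < 1`, and the
oscillation of `ℒ^n_k f` tends to `0`. By invariance `∫ f dμ_k = ∫ ℒ^n_k f dμ_{k+n}`, which lies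
between the infimum and the supremum of `ℒ^n_k f`.
-/

section Sequences

variable {W : ℕ → Set ℕ} {A : ℕ → ℕ → ℕ → Prop} {k n : ℕ} {x y z : Seq}

theorem cons_shift (z : Seq) : cons (z 0) (shift z) = z := by
  funext i; cases i <;> rfl

theorem cons_mem_sig_iff {a : ℕ} :
    cons a x ∈ Sig W A k ↔ a ∈ W k ∧ A k a (x 0) ∧ x ∈ Sig W A (k + 1) := by
  have hW : (∀ i, cons a x i ∈ W (k + i)) ↔ a ∈ W k ∧ ∀ i, x i ∈ W (k + 1 + i) := by
    rw [← Nat.and_forall_add_one]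
    simp only [Nat.add_right_comm k 1, Nat.add_assoc, cons, Nat.add_zero]
  have hA : (∀ i, A (k + i) (cons a x i) (cons a x (i + 1))) ↔
      A k a (x 0) ∧ ∀ i, A (k + 1 + i) (x i) (x (i + 1)) := by
    rw [← Nat.and_forall_add_one]
    simp only [Nat.add_right_comm k 1, Nat.add_assoc, cons, Nat.add_zero]
  simp only [Sig, Set.mem_ofPred_eq, hW, hA]
  tauto

theorem cons_mem_sig_of_agrees {a : ℕ} (hn : 1 ≤ n) (hy : y ∈ Sig W A (k + 1))
    (hxy : agrees x y n) (hx : cons a x ∈ Sig W A k) : cons a y ∈ Sig W A k := by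
  rw [cons_mem_sig_iff] at hx ⊢
  exact ⟨hx.1, hxy 0 hn ▸ hx.2.1, hy⟩

theorem shift_mem_sig (hz : z ∈ Sig W A k) : shift z ∈ Sig W A (k + 1) := by
  rw [← cons_shift z] at hz
  exact (cons_mem_sig_iff.1 hz).2.2

theorem shift_iterate_mem_sig (hz : z ∈ Sig W A k) : ∀ n, shift^[n] z ∈ Sig W A (k + n)
  | 0 => hz
  | n + 1 => by
    rw [Function.iterate_succ_apply']
    exact shift_mem_sig (shift_iterate_mem_sig hz n)

theorem shift_iterate_apply (z : Seq) (n i : ℕ) : (shift^[n] z) i = z (i + n) := by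
  induction n generalizing i with
  | zero => rfl
  | succ n ih =>
    rw [Function.iterate_succ_apply', shift, ih, Nat.add_right_comm, Nat.add_assoc]

theorem shift_iterate_prepend (w : ℕ → ℕ) (n : ℕ) (x : Seq) : shift^[n] (prepend w n x) = x := by
  funext i
  simp [shift_iterate_apply, prepend]

theorem agrees.cons (hxy : agrees x y n) (a : ℕ) : agrees (cons a x) (cons a y) (n + 1)
  | 0, _ => rfl
  | i + 1, hi => hxy i (Nat.lt_of_succ_lt_succ hi)

theorem measurableSet_sig (W : ℕ → Set ℕ) (A : ℕ → ℕ → ℕ → Prop) (k : ℕ) :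
    MeasurableSet (Sig W A k) := by
  refine .inter (measurableSet_setOfPred.2 <| .forall fun i => ?_)
    (measurableSet_setOfPred.2 <| .forall fun i => ?_)
  · exact (measurable_of_countable (· ∈ W (k + i))).comp (measurable_pi_apply i)
  · have hA : Measurable fun p : ℕ × ℕ => A (k + i) p.1 p.2 := measurable_of_countable _
    exact hA.comp (f := fun x : Seq => (x i, x (i + 1)))
      ((measurable_pi_apply i).prodMk (measurable_pi_apply (i + 1)))

theorem measurable_cons (a : ℕ) : Measurable (cons a) := by
  refine measurable_pi_iff.2 fun i => ?_
  cases i with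
  | zero => exact measurable_const
  | succ i => exact measurable_pi_apply i

end Sequences

section Metric

variable {r : ℝ} {x y : Seq}

theorem dr_nonneg (hr : 0 ≤ r) (x y : Seq) : 0 ≤ dr r x y := by
  unfold dr
  split_ifs <;> positivity

theorem dr_le_pow_of_agrees (hr0 : 0 ≤ r) (hr1 : r ≤ 1) {n : ℕ} (hxy : agrees x y n) :
    dr r x y ≤ r ^ n := by
  unfold dr
  split_ifs with hne
  · positivity
  · refine pow_le_pow_of_le_one hr0 hr1 (le_csInf (Function.ne_iff.1 hne) fun i hi => ?_)
    exact not_lt.1 fun hlt => hi (hxy i hlt)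

theorem dr_le_one (hr0 : 0 ≤ r) (hr1 : r ≤ 1) (x y : Seq) : dr r x y ≤ 1 := by
  simpa using dr_le_pow_of_agrees hr0 hr1 (n := 0) fun i hi => absurd hi i.not_lt_zero

theorem exists_agrees_and_dr_eq_pow (r : ℝ) (hxy : x ≠ y) :
    ∃ j, agrees x y j ∧ dr r x y = r ^ j :=
  ⟨sInf {i | x i ≠ y i}, fun _ hi => not_not.1 (Nat.notMem_of_lt_sInf hi), if_neg hxy⟩

theorem HolderOn.continuousOn {s : Set Seq} {κ : ℝ} {m : ℕ} {f : Seq → ℝ} (hr0 : 0 ≤ r)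
    (hr1 : r < 1) (hf : HolderOn s r κ m f) : ContinuousOn f s := by
  intro x hx
  refine Metric.tendsto_nhds.2 fun ε hε => ?_
  have hlim : Tendsto (fun n : ℕ => κ * r ^ n) atTop (nhds 0) := by
    simpa using (tendsto_pow_atTop_nhds_zero_of_lt_one hr0 hr1).const_mul κ
  obtain ⟨n, hnε, hmn⟩ := ((hlim.eventually_lt_const hε).and (eventually_ge_atTop m)).exists
  have hcyl : PiNat.cylinder x n ∈ nhds x :=
    (PiNat.isOpen_cylinder _ x n).mem_nhds (PiNat.self_mem_cylinder x n)
  filter_upwards [nhdsWithin_le_nhds hcyl, self_mem_nhdsWithin] with y hyx hy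
  exact (hf n hmn y hy x hx hyx).trans_lt hnε

end Metric

section DistortionConstants

variable {κ : ℕ → ℝ} {r : ℝ}

theorem logB_succ (κ : ℕ → ℝ) (r : ℝ) (m : ℕ) :
    logB κ r (m + 1) = r * (logB κ r m + κ m) := by
  simp only [logB, ← Finset.Ico_add_one_right_eq_Icc, Finset.sum_Ico_eq_sum_range,
    Nat.add_sub_cancel, Finset.sum_range_succ' _ m, mul_add, Finset.mul_sum]
  congr 1
  · refine Finset.sum_congr rfl fun i _ => ?_
    rw [show m + 1 - (1 + (i + 1)) = m - (1 + i) by omega]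
    ring
  · simp [mul_comm]

theorem logB_nonneg (hκ : ∀ n, 0 ≤ κ n) (hr : 0 ≤ r) (m : ℕ) : 0 ≤ logB κ r m :=
  Finset.sum_nonneg fun _ _ => mul_nonneg (hκ _) (pow_nonneg hr _)

theorem one_le_Bconst (hκ : ∀ n, 0 ≤ κ n) (hr : 0 ≤ r) (m : ℕ) : 1 ≤ Bconst κ r m :=
  one_le_exp (logB_nonneg hκ hr m)

end DistortionConstants

section RuelleOperator

variable {W : ℕ → Set ℕ} {A : ℕ → ℕ → ℕ → Prop} {φ : ℕ → Seq → ℝ} {k : ℕ} {f : Seq → ℝ}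
  {a b : ℝ} {x y z : Seq}

/-- The weight `𝟙_{Σ_k} e^{φ_k}`, extended by zero to all sequences so that both `ℒ_k` and its
dual become sums over all letters. -/
noncomputable def weight (W : ℕ → Set ℕ) (A : ℕ → ℕ → ℕ → Prop) (φ : ℕ → Seq → ℝ) (k : ℕ) :
    Seq → ℝ :=
  (Sig W A k).indicator fun y => exp (φ k y)

/-- The normalization `ℒ_k(1) = 1` on `Σ_{k+1}`, which makes `ℒ_k` a Markov operator. -/
def IsNormalized (W : ℕ → Set ℕ) (A : ℕ → ℕ → ℕ → Prop) (φ : ℕ → Seq → ℝ) (k : ℕ) : Prop :=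
  ∀ x ∈ Sig W A (k + 1), Ruelle W A φ k (fun _ => 1) x = 1

theorem weight_of_mem (hz : z ∈ Sig W A k) : weight W A φ k z = exp (φ k z) :=
  Set.indicator_of_mem hz _

theorem weight_of_notMem (hz : z ∉ Sig W A k) : weight W A φ k z = 0 :=
  Set.indicator_of_notMem hz _

theorem weight_nonneg (z : Seq) : 0 ≤ weight W A φ k z :=
  Set.indicator_nonneg (fun _ _ => (exp_pos _).le) z

theorem weight_mul_le_weight_mul {u v : ℝ} (h : z ∈ Sig W A k → u ≤ v) :
    weight W A φ k z * u ≤ weight W A φ k z * v := by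
  by_cases hz : z ∈ Sig W A k
  · exact mul_le_mul_of_nonneg_left (h hz) (weight_nonneg z)
  · simp [weight_of_notMem hz]

theorem ruelle_eq_tsum_weight (k : ℕ) (f : Seq → ℝ) (x : Seq) :
    Ruelle W A φ k f x = ∑' s, weight W A φ k (cons s x) * f (cons s x) := by
  refine tsum_congr fun s => ?_
  split_ifs with hs
  · rw [weight_of_mem hs]
  · rw [weight_of_notMem hs, zero_mul]

theorem ruelle_neg (k : ℕ) (f : Seq → ℝ) : Ruelle W A φ k (-f) = -Ruelle W A φ k f := by
  funext x
  simp [ruelle_eq_tsum_weight, tsum_neg]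

theorem ruelleIter_succ (k n : ℕ) (f : Seq → ℝ) :
    RuelleIter W A φ k (n + 1) f = Ruelle W A φ (k + n) (RuelleIter W A φ k n f) :=
  rfl

theorem ruelleIter_neg (k n : ℕ) (f : Seq → ℝ) :
    RuelleIter W A φ k n (-f) = -RuelleIter W A φ k n f := by
  induction n with
  | zero => rfl
  | succ n ih => rw [ruelleIter_succ, ih, ruelle_neg, ruelleIter_succ]

theorem ruelleIter_add (k l n : ℕ) (f : Seq → ℝ) :
    RuelleIter W A φ k (l + n) f = RuelleIter W A φ (k + l) n (RuelleIter W A φ k l f) := by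
  induction n with
  | zero => rfl
  | succ n ih => rw [← Nat.add_assoc l, ruelleIter_succ, ih, ruelleIter_succ, Nat.add_assoc]

namespace IsNormalized

theorem hasSum_weight (h : IsNormalized W A φ k) (hx : x ∈ Sig W A (k + 1)) :
    HasSum (fun s => weight W A φ k (cons s x)) 1 := by
  have htsum : ∑' s, weight W A φ k (cons s x) = 1 := by
    simpa [ruelle_eq_tsum_weight] using h x hx
  have hsum : Summable fun s => weight W A φ k (cons s x) := by
    by_contra hns
    simp [tsum_eq_zero_of_not_summable hns] at htsum
  exact htsum ▸ hsum.hasSum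

theorem hasSum_weight_mul_sub (h : IsNormalized W A φ k)
    (hf : Set.MapsTo f (Sig W A k) (Set.Icc a b)) (hx : x ∈ Sig W A (k + 1)) (c : ℝ) :
    HasSum (fun s => weight W A φ k (cons s x) * (f (cons s x) - c))
      (Ruelle W A φ k f x - c) := by
  have hw := h.hasSum_weight hx
  have hsum : Summable fun s => weight W A φ k (cons s x) * f (cons s x) := by
    refine .of_norm_bounded (hw.summable.mul_right (max |a| |b|)) fun s => ?_
    rw [norm_mul, norm_of_nonneg (weight_nonneg _)]
    exact weight_mul_le_weight_mul fun hs => abs_le_max_abs_abs (hf hs).1 (hf hs).2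
  simpa [ruelle_eq_tsum_weight, mul_sub] using hsum.hasSum.sub (hw.mul_right c)

theorem mapsTo_ruelle (h : IsNormalized W A φ k)
    (hf : Set.MapsTo f (Sig W A k) (Set.Icc a b)) :
    Set.MapsTo (Ruelle W A φ k f) (Sig W A (k + 1)) (Set.Icc a b) := by
  refine fun x hx => ⟨?_, ?_⟩
  · refine sub_nonneg.1 ((h.hasSum_weight_mul_sub hf hx a).nonneg fun s => ?_)
    simpa using weight_mul_le_weight_mul fun hs => sub_nonneg.2 (hf hs).1
  · refine sub_nonpos.1 ((h.hasSum_weight_mul_sub hf hx b).nonpos fun s => ?_)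
    simpa using weight_mul_le_weight_mul fun hs => sub_nonpos.2 (hf hs).2

theorem weight_mul_sub_le_ruelle_sub (h : IsNormalized W A φ k)
    (hf : Set.MapsTo f (Sig W A k) (Set.Icc a b)) (hz : z ∈ Sig W A k) :
    weight W A φ k z * (f z - a) ≤ Ruelle W A φ k f (shift z) - a := by
  have hle := le_hasSum (h.hasSum_weight_mul_sub hf (shift_mem_sig hz) a) (z 0) fun s _ => by
    simpa using weight_mul_le_weight_mul fun hs => sub_nonneg.2 (hf hs).1
  rwa [cons_shift] at hle

end IsNormalized

theorem mapsTo_ruelleIter (hL : ∀ m, IsNormalized W A φ m)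
    (hf : Set.MapsTo f (Sig W A k) (Set.Icc a b)) :
    ∀ n, Set.MapsTo (RuelleIter W A φ k n f) (Sig W A (k + n)) (Set.Icc a b)
  | 0 => hf
  | n + 1 => (hL (k + n)).mapsTo_ruelle (mapsTo_ruelleIter hL hf n)

theorem birkhoff_succ (φ : ℕ → Seq → ℝ) (k n : ℕ) (z : Seq) :
    birkhoff φ k (n + 1) z = birkhoff φ k n z + φ (k + n) (shift^[n] z) :=
  Finset.sum_range_succ _ _

theorem exp_birkhoff_mul_sub_le_ruelleIter_sub (hL : ∀ m, IsNormalized W A φ m)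
    (hf : Set.MapsTo f (Sig W A k) (Set.Icc a b)) (hz : z ∈ Sig W A k) (n : ℕ) :
    exp (birkhoff φ k n z) * (f z - a) ≤ RuelleIter W A φ k n f (shift^[n] z) - a := by
  induction n with
  | zero => simp [birkhoff, RuelleIter]
  | succ n ih =>
    have hn := shift_iterate_mem_sig hz n
    rw [birkhoff_succ, exp_add, mul_right_comm, Function.iterate_succ_apply', ← mul_comm (exp _)]
    refine (mul_le_mul_of_nonneg_left ih (exp_pos _).le).trans ?_
    rw [← weight_of_mem hn]
    exact (hL (k + n)).weight_mul_sub_le_ruelle_sub (mapsTo_ruelleIter hL hf n) hn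

/-- The branches through `x` and `y` are coupled with probability `C`; off this event the values
of `f` differ by at most `b - a`. -/
theorem ruelleIter_sub_le_of_le_exp_birkhoff (hL : ∀ m, IsNormalized W A φ m)
    (hf : Set.MapsTo f (Sig W A k) (Set.Icc a b)) (hx : x ∈ Sig W A k) (hy : y ∈ Sig W A k)
    {n : ℕ} {C : ℝ} (hCx : C ≤ exp (birkhoff φ k n x)) (hCy : C ≤ exp (birkhoff φ k n y)) :
    RuelleIter W A φ k n f (shift^[n] x) - RuelleIter W A φ k n f (shift^[n] y) ≤
      (1 - C) * (b - a) + C * (f x - f y) := by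
  have hneg : Set.MapsTo (-f) (Sig W A k) (Set.Icc (-b) (-a)) := fun z hz =>
    ⟨neg_le_neg (hf hz).2, neg_le_neg (hf hz).1⟩
  have hupper : C * (b - f x) ≤ b - RuelleIter W A φ k n f (shift^[n] x) := by
    have hle := exp_birkhoff_mul_sub_le_ruelleIter_sub hL hneg hx n
    simp only [ruelleIter_neg, Pi.neg_apply, neg_sub_neg] at hle
    exact (mul_le_mul_of_nonneg_right hCx (sub_nonneg.2 (hf hx).2)).trans hle
  have hlower : C * (f y - a) ≤ RuelleIter W A φ k n f (shift^[n] y) - a :=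
    (mul_le_mul_of_nonneg_right hCy (sub_nonneg.2 (hf hy).1)).trans
      (exp_birkhoff_mul_sub_le_ruelleIter_sub hL hf hy n)
  linarith

end RuelleOperator

section Distortion

variable {W : ℕ → Set ℕ} {A : ℕ → ℕ → ℕ → Prop} {φ : ℕ → Seq → ℝ} {k : ℕ} {f : Seq → ℝ}
  {a b r : ℝ} {x y : Seq}

theorem HolderOn.weight_cons_le {κ : ℝ} (hφ : HolderOn (Sig W A k) r κ 2 (φ k))
    {j : ℕ} (hj : 1 ≤ j) (hy : y ∈ Sig W A (k + 1)) (hxy : agrees x y j) (s : ℕ) :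
    weight W A φ k (cons s x) ≤ exp (κ * r ^ (j + 1)) * weight W A φ k (cons s y) := by
  by_cases hsx : cons s x ∈ Sig W A k
  · have hsy : cons s y ∈ Sig W A k := cons_mem_sig_of_agrees hj hy hxy hsx
    rw [weight_of_mem hsx, weight_of_mem hsy, ← exp_add, exp_le_exp]
    linarith [le_abs_self (φ k (cons s x) - φ k (cons s y)),
      hφ (j + 1) (by omega) _ hsx _ hsy (hxy.cons s)]
  · rw [weight_of_notMem hsx]
    exact mul_nonneg (exp_pos _).le (weight_nonneg _)

theorem IsNormalized.ruelle_sub_le_exp_mul (h : IsNormalized W A φ k) {κ : ℝ}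
    (hφ : HolderOn (Sig W A k) r κ 2 (φ k)) (hf : Set.MapsTo f (Sig W A k) (Set.Icc a b))
    {j : ℕ} (hj : 1 ≤ j) (hx : x ∈ Sig W A (k + 1)) (hy : y ∈ Sig W A (k + 1))
    (hxy : agrees x y j) {c E : ℝ} (hE : 0 ≤ E)
    (hfE : ∀ z ∈ Sig W A k, ∀ w ∈ Sig W A k, agrees z w (j + 1) → f z - c ≤ E * (f w - a)) :
    Ruelle W A φ k f x - c ≤ exp (κ * r ^ (j + 1)) * E * (Ruelle W A φ k f y - a) := by
  refine hasSum_le (fun s => ?_) (h.hasSum_weight_mul_sub hf hx c)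
    ((h.hasSum_weight_mul_sub hf hy a).mul_left (exp (κ * r ^ (j + 1)) * E))
  by_cases hsx : cons s x ∈ Sig W A k
  · have hsy : cons s y ∈ Sig W A k := cons_mem_sig_of_agrees hj hy hxy hsx
    calc weight W A φ k (cons s x) * (f (cons s x) - c)
        ≤ weight W A φ k (cons s x) * (E * (f (cons s y) - a)) :=
          weight_mul_le_weight_mul fun _ => hfE _ hsx _ hsy (hxy.cons s)
      _ ≤ exp (κ * r ^ (j + 1)) * weight W A φ k (cons s y) * (E * (f (cons s y) - a)) :=
          mul_le_mul_of_nonneg_right (hφ.weight_cons_le hj hy hxy s)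
            (mul_nonneg hE (sub_nonneg.2 (hf hsy).1))
      _ = exp (κ * r ^ (j + 1)) * E * (weight W A φ k (cons s y) * (f (cons s y) - a)) := by ring
  · rw [weight_of_notMem hsx, zero_mul]
    refine mul_nonneg (mul_nonneg (exp_pos _).le hE) ?_
    simpa using weight_mul_le_weight_mul fun hs => sub_nonneg.2 (hf hs).1

variable {κ : ℕ → ℝ}

theorem ruelleIter_sub_add_le_exp_mul (hL : ∀ m, IsNormalized W A φ m) (hκ : ∀ m, 0 ≤ κ m)
    (hr : 0 ≤ r) (hφ : ∀ m, HolderOn (Sig W A m) r (κ m) 2 (φ m))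
    (hf : Set.MapsTo f (Sig W A k) (Set.Icc a b)) {ε : ℝ} {n j : ℕ} (hj : 1 ≤ j)
    (hfε : ∀ z ∈ Sig W A k, ∀ w ∈ Sig W A k, agrees z w (n + j) → f z - f w ≤ ε)
    (hx : x ∈ Sig W A (k + n)) (hy : y ∈ Sig W A (k + n)) (hxy : agrees x y j) :
    RuelleIter W A φ k n f x - (a + ε) ≤
      exp (logB κ r (k + n) * r ^ j) * (RuelleIter W A φ k n f y - a) := by
  induction n generalizing j x y with
  | zero =>
    have hE : 1 ≤ exp (logB κ r (k + 0) * r ^ j) :=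
      one_le_exp (mul_nonneg (logB_nonneg hκ hr _) (pow_nonneg hr j))
    have hle := le_mul_of_one_le_left (sub_nonneg.2 (hf hy).1) hE
    have hε := hfε x hx y hy (by rwa [Nat.zero_add])
    change f x - (a + ε) ≤ _ * (f y - a)
    linarith
  | succ n ih =>
    have hstep : exp (logB κ r (k + (n + 1)) * r ^ j) =
        exp (κ (k + n) * r ^ (j + 1)) * exp (logB κ r (k + n) * r ^ (j + 1)) := by
      rw [← Nat.add_assoc k, logB_succ, ← exp_add]
      ring_nf
    rw [hstep]
    refine (hL (k + n)).ruelle_sub_le_exp_mul (hφ (k + n)) (mapsTo_ruelleIter hL hf n) hj hx hy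
      hxy (exp_pos _).le fun z hz w hw hzw => ih (by omega) ?_ hz hw hzw
    rwa [Nat.add_right_comm] at hfε

theorem ruelleIter_sub_le_of_agrees (hL : ∀ m, IsNormalized W A φ m) (hκ : ∀ m, 0 ≤ κ m)
    (hr : 0 ≤ r) (hφ : ∀ m, HolderOn (Sig W A m) r (κ m) 2 (φ m))
    (hf : Set.MapsTo f (Sig W A k) (Set.Icc a b)) {ε : ℝ} {n j : ℕ} (hj : 1 ≤ j)
    (hfε : ∀ z ∈ Sig W A k, ∀ w ∈ Sig W A k, agrees z w (n + j) → f z - f w ≤ ε)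
    (hx : x ∈ Sig W A (k + n)) (hy : y ∈ Sig W A (k + n)) (hxy : agrees x y j) :
    RuelleIter W A φ k n f x - RuelleIter W A φ k n f y ≤
      (1 - exp (-(logB κ r (k + n) * r ^ j))) * (b - a) +
        exp (-(logB κ r (k + n) * r ^ j)) * ε := by
  have hdist := mul_le_mul_of_nonneg_left
    (ruelleIter_sub_add_le_exp_mul hL hκ hr hφ hf hj hfε hx hy hxy)
    (exp_pos (-(logB κ r (k + n) * r ^ j))).le
  rw [← mul_assoc, ← exp_add, neg_add_cancel, exp_zero, one_mul] at hdist
  have he : exp (-(logB κ r (k + n) * r ^ j)) ≤ 1 :=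
    exp_le_one_iff.2 (neg_nonpos.2 (mul_nonneg (logB_nonneg hκ hr _) (pow_nonneg hr j)))
  linarith [mul_le_mul_of_nonneg_left
    (sub_le_sub_right (mapsTo_ruelleIter hL hf n hx).2 a) (sub_nonneg.2 he)]

end Distortion

section Duality

variable {W : ℕ → Set ℕ} {A : ℕ → ℕ → ℕ → Prop} {φ : ℕ → Seq → ℝ} {k : ℕ} {f : Seq → ℝ}
  {μ : ℕ → Measure Seq}

theorem measurable_ruelle (hw : Measurable (weight W A φ k)) (hf : Measurable f) :
    Measurable (Ruelle W A φ k f) := by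
  have hsum : Measurable fun x => ∑' s, weight W A φ k (cons s x) * f (cons s x) :=
    .tsum fun s => (hw.comp (measurable_cons s)).mul (hf.comp (measurable_cons s))
  simpa only [← ruelle_eq_tsum_weight] using hsum

theorem measurable_ruelleIter (hw : ∀ m, Measurable (weight W A φ m)) (hf : Measurable f) :
    ∀ n, Measurable (RuelleIter W A φ k n f)
  | 0 => hf
  | n + 1 => measurable_ruelle (hw (k + n)) (measurable_ruelleIter hw hf n)

theorem integral_dualRuelle (hw : Measurable (weight W A φ k)) {ν : Measure Seq}
    (hf : Integrable f (dualRuelle W A φ k ν)) :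
    ∫ y, f y ∂(dualRuelle W A φ k ν) = ∫ x, Ruelle W A φ k f x ∂ν := by
  let branch (s : ℕ) : Measure Seq :=
    (ν.withDensity fun x => ENNReal.ofReal (weight W A φ k (cons s x))).map (cons s)
  have hbranch : dualRuelle W A φ k ν = Measure.sum branch := rfl
  have hmeas (s : ℕ) : Measurable fun x => ENNReal.ofReal (weight W A φ k (cons s x)) :=
    (hw.comp (measurable_cons s)).ennreal_ofReal
  have htop (s : ℕ) : ∀ᵐ x ∂ν, ENNReal.ofReal (weight W A φ k (cons s x)) < ⊤ :=
    .of_forall fun _ => ENNReal.ofReal_lt_top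
  have hintegral (s : ℕ) {g : Seq → ℝ} (hg : AEStronglyMeasurable g (branch s)) :
      ∫ y, g y ∂(branch s) = ∫ x, weight W A φ k (cons s x) * g (cons s x) ∂ν := by
    rw [integral_map (measurable_cons s).aemeasurable hg,
      integral_withDensity_eq_integral_toReal_smul (hmeas s) (htop s)]
    simp only [ENNReal.toReal_ofReal (weight_nonneg _), smul_eq_mul]
  rw [hbranch] at hf ⊢
  obtain ⟨hfs, hsummable⟩ := integrable_sum_measure_iff.1 hf
  have hintegrable (s : ℕ) : Integrable (fun x => weight W A φ k (cons s x) * f (cons s x)) ν := by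
    have hint := (integrable_map_measure (hfs s).aestronglyMeasurable
      (measurable_cons s).aemeasurable).1 (hfs s)
    simpa only [integrable_withDensity_iff_integrable_smul' (hmeas s) (htop s), smul_eq_mul,
      ENNReal.toReal_ofReal (weight_nonneg _), Function.comp_apply] using hint
  have hnorm (s : ℕ) : ∫ y, ‖f y‖ ∂(branch s) =
      ∫ x, ‖weight W A φ k (cons s x) * f (cons s x)‖ ∂ν := by
    simp only [norm_mul, norm_of_nonneg (weight_nonneg _)]
    exact hintegral s (hfs s).norm.aestronglyMeasurable
  simp only [hnorm] at hsummable
  simp only [integral_sum_measure hf, hintegral _ (hfs _).aestronglyMeasurable,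
    integral_tsum_of_summable_integral_norm hintegrable hsummable, ruelle_eq_tsum_weight]

theorem ae_mem_sig {ν : Measure Seq} [IsProbabilityMeasure ν] (hν : ν (Sig W A k) = 1) :
    ∀ᵐ x ∂ν, x ∈ Sig W A k :=
  (prob_compl_eq_zero_iff (measurableSet_sig W A k)).2 hν

theorem integrable_of_mapsTo {ν : Measure Seq} [IsProbabilityMeasure ν]
    (hν : ν (Sig W A k) = 1) (hfm : Measurable f) {a b : ℝ}
    (hf : Set.MapsTo f (Sig W A k) (Set.Icc a b)) : Integrable f ν :=
  .of_mem_Icc a b hfm.aemeasurable ((ae_mem_sig hν).mono fun _ hx => hf hx)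

theorem integral_ruelleIter [∀ m, IsProbabilityMeasure (μ m)] (hμ : ∀ m, μ m (Sig W A m) = 1)
    (hμinv : ∀ m, dualRuelle W A φ m (μ (m + 1)) = μ m) (hL : ∀ m, IsNormalized W A φ m)
    (hw : ∀ m, Measurable (weight W A φ m)) (hfm : Measurable f) {a b : ℝ}
    (hf : Set.MapsTo f (Sig W A k) (Set.Icc a b)) (n : ℕ) :
    ∫ x, RuelleIter W A φ k n f x ∂(μ (k + n)) = ∫ y, f y ∂(μ k) := by
  induction n with
  | zero => rfl
  | succ n ih =>
    have hint := integrable_of_mapsTo (hμ (k + n)) (measurable_ruelleIter hw hfm n)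
      (mapsTo_ruelleIter hL hf n)
    rw [← hμinv (k + n)] at hint
    rw [← ih, ← hμinv (k + n), integral_dualRuelle (hw (k + n)) hint]
    rfl

theorem abs_sub_integral_le {ν : Measure Seq} [IsProbabilityMeasure ν]
    (hν : ν (Sig W A k) = 1) (hf : Integrable f ν) {δ : ℝ}
    (hδ : ∀ x ∈ Sig W A k, ∀ y ∈ Sig W A k, f x - f y ≤ δ) {x : Seq} (hx : x ∈ Sig W A k) :
    |f x - ∫ y, f y ∂ν| ≤ δ := by
  have hball : ∀ᵐ y ∂ν, f y ∈ Metric.closedBall (f x) δ :=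
    (ae_mem_sig hν).mono fun y hy => abs_sub_le_iff.2 ⟨hδ y hy x hx, hδ x hx y hy⟩
  rw [abs_sub_comm]
  exact (convex_closedBall (f x) δ).integral_mem Metric.isClosed_closedBall hball hf

end Duality

section Oscillation

variable {α : Type*}

theorem exists_mapsTo_Icc_of_forall_sub_le {s : Set α} {f : α → ℝ} {c : ℝ}
    (h : ∀ x ∈ s, ∀ y ∈ s, f x - f y ≤ c) : ∃ a, Set.MapsTo f s (Set.Icc a (a + c)) := by
  rcases s.eq_empty_or_nonempty with rfl | ⟨x₀, hx₀⟩
  · exact ⟨0, Set.mapsTo_empty _ _⟩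
  have hbdd : BddBelow (f '' s) :=
    ⟨f x₀ - c, Set.forall_mem_image.2 fun y hy => sub_le_comm.1 (h x₀ hx₀ y hy)⟩
  refine ⟨sInf (f '' s), fun x hx => ⟨csInf_le hbdd (Set.mem_image_of_mem f hx), ?_⟩⟩
  exact sub_le_iff_le_add.1 <| le_csInf ⟨f x₀, Set.mem_image_of_mem f hx₀⟩ <|
    Set.forall_mem_image.2 fun y hy => sub_le_comm.1 (h x hx y hy)

theorem tendsto_sSup_abs_nhds_zero {ι : Type*} {l : Filter ι} {s : ι → Set α} {g : ι → α → ℝ}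
    (h : ∀ ε > 0, ∀ᶠ i in l, ∀ x ∈ s i, |g i x| ≤ ε) :
    Tendsto (fun i => sSup {t | ∃ x ∈ s i, t = |g i x|}) l (nhds 0) := by
  refine Metric.tendsto_nhds.2 fun ε hε => (h (ε / 2) (half_pos hε)).mono fun i hi => ?_
  have hnonneg : 0 ≤ sSup {t | ∃ x ∈ s i, t = |g i x|} :=
    Real.sSup_nonneg fun t ⟨x, _, ht⟩ => ht ▸ abs_nonneg _
  have hle : sSup {t | ∃ x ∈ s i, t = |g i x|} ≤ ε / 2 :=
    Real.sSup_le (fun t ⟨x, hx, ht⟩ => ht ▸ hi x hx) (half_pos hε).le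
  rw [dist_zero_right, norm_of_nonneg hnonneg]
  exact hle.trans_lt (half_lt_self hε)

end Oscillation

namespace HstarSystem

variable (S : HstarSystem) {k : ℕ} {f : Seq → ℝ} {Λ : ℝ} {x y : Seq}

theorem isNormalized (k : ℕ) : IsNormalized S.W S.A S.φ k :=
  S.normalized k

theorem holderOn (k : ℕ) : HolderOn (Sig S.W S.A k) S.r (S.κ k) 2 (S.φ k) := by
  by_cases hk : k ∈ S.K
  · exact fun n hn => S.holder1 k hk n (one_le_two.trans hn)
  · exact S.holder2 k hk

theorem measurable_weight (k : ℕ) : Measurable (weight S.W S.A S.φ k) := by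
  classical
  rw [weight, ← Set.piecewise_eq_indicator]
  exact ((S.holderOn k).continuousOn S.hr.1.le S.hr.2).rexp.measurable_piecewise
    continuousOn_const (measurableSet_sig S.W S.A k)

theorem one_le_Bconst (k : ℕ) : 1 ≤ Bconst S.κ S.r k :=
  NSShift.one_le_Bconst S.κnonneg S.hr.1.le k

theorem Bconst_eq_mul_alphaC (k : ℕ) : Bconst S.κ S.r k = S.β * S.alphaC k :=
  (mul_div_cancel₀ _ S.hβ.1.ne').symm

theorem one_le_alphaC (k : ℕ) : 1 ≤ S.alphaC k :=
  (one_le_div S.hβ.1).2 (S.hβ.2.le.trans (S.one_le_Bconst k))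

theorem alphaC_pos (k : ℕ) : 0 < S.alphaC k :=
  one_pos.trans_le (S.one_le_alphaC k)

theorem pow_nseq_mul_alphaC_lt_one (k : ℕ) : S.r ^ S.nseq k * S.alphaC k < 1 := by
  have hlt : -log (S.alphaC k) / log S.r < S.nseq k :=
    (Int.lt_floor_add_one _).trans_le (mod_cast S.hn k)
  rw [div_lt_iff_of_neg (log_neg S.hr.1 S.hr.2)] at hlt
  have hpow := pow_pos S.hr.1 (S.nseq k)
  rw [← log_neg_iff (mul_pos hpow (S.alphaC_pos k)),
    log_mul hpow.ne' (S.alphaC_pos k).ne', log_pow]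
  linarith

theorem dbar_nonneg (k : ℕ) (x y : Seq) : 0 ≤ S.dbar k x y :=
  le_min zero_le_one (mul_nonneg (S.alphaC_pos k).le (dr_nonneg S.hr.1.le x y))

theorem dbar_le_one (k : ℕ) (x y : Seq) : S.dbar k x y ≤ 1 :=
  min_le_left _ _

theorem dbar_le_of_agrees {n : ℕ} (hxy : agrees x y n) : S.dbar k x y ≤ S.alphaC k * S.r ^ n :=
  (min_le_right _ _).trans <| mul_le_mul_of_nonneg_left
    (dr_le_pow_of_agrees S.hr.1.le S.hr.2.le hxy) (S.alphaC_pos k).le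

/-- `f` is Lipschitz on `Σ_k` with constant `Λ` for the metric `d̄_k`. Exchanging `x` and `y`
turns the one-sided bound into a bound on `|f x - f y|`. -/
def IsDbarLipschitz (k : ℕ) (Λ : ℝ) (f : Seq → ℝ) : Prop :=
  0 ≤ Λ ∧ ∀ x ∈ Sig S.W S.A k, ∀ y ∈ Sig S.W S.A k, f x - f y ≤ Λ * S.dbar k x y

variable {S}

theorem isDbarLipschitz_of_abs_sub_le_mul_dr (hΛ : 0 ≤ Λ)
    (hf : ∀ x ∈ Sig S.W S.A k, ∀ y ∈ Sig S.W S.A k, |f x - f y| ≤ Λ * dr S.r x y) :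
    S.IsDbarLipschitz k Λ f := by
  have hdr (x y : Seq) : dr S.r x y ≤ S.dbar k x y :=
    le_min (dr_le_one S.hr.1.le S.hr.2.le x y)
      (le_mul_of_one_le_left (dr_nonneg S.hr.1.le x y) (S.one_le_alphaC k))
  exact ⟨hΛ, fun x hx y hy => ((le_abs_self _).trans (hf x hx y hy)).trans
    (mul_le_mul_of_nonneg_left (hdr x y) hΛ)⟩

namespace IsDbarLipschitz

theorem mono {Λ' : ℝ} (hf : S.IsDbarLipschitz k Λ f) (hΛ : Λ ≤ Λ') :
    S.IsDbarLipschitz k Λ' f :=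
  ⟨hf.1.trans hΛ, fun x hx y hy => (hf.2 x hx y hy).trans
    (mul_le_mul_of_nonneg_right hΛ (S.dbar_nonneg k x y))⟩

theorem exists_mapsTo_Icc (hf : S.IsDbarLipschitz k Λ f) :
    ∃ a, Set.MapsTo f (Sig S.W S.A k) (Set.Icc a (a + Λ)) :=
  exists_mapsTo_Icc_of_forall_sub_le fun x hx y hy =>
    (hf.2 x hx y hy).trans (mul_le_of_le_one_right hf.1 (S.dbar_le_one k x y))

theorem ruelleIter_sub_le_of_agrees (hf : S.IsDbarLipschitz k Λ f) {n j : ℕ} (hj : 1 ≤ j)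
    (hx : x ∈ Sig S.W S.A (k + n)) (hy : y ∈ Sig S.W S.A (k + n)) (hxy : agrees x y j) :
    RuelleIter S.W S.A S.φ k n f x - RuelleIter S.W S.A S.φ k n f y ≤
      Λ * (1 - exp (-(logB S.κ S.r (k + n) * S.r ^ j)) * (1 - S.alphaC k * S.r ^ (n + j))) := by
  obtain ⟨a, ha⟩ := hf.exists_mapsTo_Icc
  have hle := NSShift.ruelleIter_sub_le_of_agrees S.isNormalized S.κnonneg S.hr.1.le S.holderOn
    ha hj (fun z hz w hw hzw => (hf.2 z hz w hw).trans
      (mul_le_mul_of_nonneg_left (S.dbar_le_of_agrees hzw) hf.1)) hx hy hxy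
  linarith

theorem ruelleIter_nseq_sub_le (hf : S.IsDbarLipschitz k Λ f)
    (hx : x ∈ Sig S.W S.A (k + S.nseq k)) (hy : y ∈ Sig S.W S.A (k + S.nseq k))
    (hxy : x 0 = y 0) :
    RuelleIter S.W S.A S.φ k (S.nseq k) f x - RuelleIter S.W S.A S.φ k (S.nseq k) f y ≤
      (1 - (1 - S.r ^ S.nseq k * S.alphaC k) / Bconst S.κ S.r (k + S.nseq k)) * Λ := by
  have hagree : agrees x y 1 := fun i hi => Nat.lt_one_iff.1 hi ▸ hxy
  refine (hf.ruelleIter_sub_le_of_agrees le_rfl hx hy hagree).trans ?_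
  rw [mul_comm Λ]
  refine mul_le_mul_of_nonneg_right (sub_le_sub_left ?_ 1) hf.1
  have hexp : (Bconst S.κ S.r (k + S.nseq k))⁻¹ ≤
      exp (-(logB S.κ S.r (k + S.nseq k) * S.r ^ 1)) := by
    rw [Bconst, ← exp_neg, exp_le_exp, neg_le_neg_iff, pow_one]
    exact mul_le_of_le_one_right (logB_nonneg S.κnonneg S.hr.1.le _) S.hr.2.le
  have hpow : S.alphaC k * S.r ^ (S.nseq k + 1) ≤ S.r ^ S.nseq k * S.alphaC k := by
    rw [mul_comm]
    exact mul_le_mul_of_nonneg_right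
      (pow_le_pow_of_le_one S.hr.1.le S.hr.2.le (Nat.le_succ _)) (S.alphaC_pos k).le
  rw [div_eq_inv_mul]
  exact mul_le_mul hexp (sub_le_sub_left hpow 1)
    (sub_nonneg.2 (S.pow_nseq_mul_alphaC_lt_one k).le) (exp_pos _).le

/-- The points `τ_{u(x)} x` and `τ_{u(y)} y` share their first letter, hence are close at time
`n_k`; with probability `C` the two branches pass through them. -/
theorem ruelleIter_lconst_sub_le (hf : S.IsDbarLipschitz k Λ f)
    (hx : x ∈ Sig S.W S.A (k + S.lconst k)) (hy : y ∈ Sig S.W S.A (k + S.lconst k)) :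
    RuelleIter S.W S.A S.φ k (S.lconst k) f x - RuelleIter S.W S.A S.φ k (S.lconst k) f y ≤
      S.sconst k * Λ := by
  obtain ⟨a, ha⟩ := hf.exists_mapsTo_Icc
  rw [lconst, ← Nat.add_assoc] at hx hy
  obtain ⟨hux, hux0, -⟩ := S.hu _ x hx
  obtain ⟨huy, huy0, -⟩ := S.hu _ y hy
  have hletter : prepend (S.u (k + S.nseq k) x) (S.mseq (k + S.nseq k)) x 0 =
      prepend (S.u (k + S.nseq k) y) (S.mseq (k + S.nseq k)) y 0 := by
    have hm : 0 < S.mseq (k + S.nseq k) := (S.hm_mem _).1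
    simp only [prepend, if_pos hm, hux0, huy0]
  have hcouple := ruelleIter_sub_le_of_le_exp_birkhoff S.isNormalized
    (mapsTo_ruelleIter S.isNormalized ha (S.nseq k)) hux huy (S.hC_le _ x hx) (S.hC_le _ y hy)
  rw [shift_iterate_prepend, shift_iterate_prepend, ← ruelleIter_add] at hcouple
  calc _ ≤ (1 - S.Cseq (k + S.nseq k)) * (a + Λ - a) + S.Cseq (k + S.nseq k) * _ := hcouple
    _ ≤ (1 - S.Cseq (k + S.nseq k)) * (a + Λ - a) + S.Cseq (k + S.nseq k) *
        ((1 - (1 - S.r ^ S.nseq k * S.alphaC k) / Bconst S.κ S.r (k + S.nseq k)) * Λ) := by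
      gcongr
      · exact (S.hC_pos _).le
      · exact hf.ruelleIter_nseq_sub_le hux huy hletter
    _ = S.sconst k * Λ := by rw [sconst]; ring

theorem ruelleIter_lconst_sub_le_of_agrees (hf : S.IsDbarLipschitz k Λ f) {j : ℕ} (hj : 1 ≤ j)
    (hx : x ∈ Sig S.W S.A (k + S.lconst k)) (hy : y ∈ Sig S.W S.A (k + S.lconst k))
    (hxy : agrees x y j) :
    RuelleIter S.W S.A S.φ k (S.lconst k) f x - RuelleIter S.W S.A S.φ k (S.lconst k) f y ≤
      S.β * (S.alphaC (k + S.lconst k) * S.r ^ j) * Λ := by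
  refine (hf.ruelleIter_sub_le_of_agrees hj hx hy hxy).trans ?_
  set l := S.lconst k
  set b := logB S.κ S.r (k + l)
  have hrj : 0 < S.r ^ j := pow_pos S.hr.1 j
  have hexp : 1 - exp (-(b * S.r ^ j)) ≤ b * S.r ^ j := by
    linarith [add_one_le_exp (-(b * S.r ^ j))]
  have hexp_le_one : exp (-(b * S.r ^ j)) ≤ 1 :=
    exp_le_one_iff.2 (neg_nonpos.2 (mul_nonneg (logB_nonneg S.κnonneg S.hr.1.le _) hrj.le))
  have hpow : S.alphaC k * S.r ^ (l + j) ≤ S.r ^ j := by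
    have hl : S.r ^ l * S.alphaC k ≤ 1 :=
      (mul_le_mul_of_nonneg_right (pow_le_pow_of_le_one S.hr.1.le S.hr.2.le
        (Nat.le_add_right _ _)) (S.alphaC_pos k).le).trans (S.pow_nseq_mul_alphaC_lt_one k).le
    rw [pow_add, ← mul_assoc, mul_comm (S.alphaC k)]
    exact mul_le_of_le_one_left hrj.le hl
  have hB : b + 1 ≤ S.β * S.alphaC (k + l) := S.Bconst_eq_mul_alphaC (k + l) ▸ add_one_le_exp b
  have hαr : 0 ≤ S.alphaC k * S.r ^ (l + j) :=
    mul_nonneg (S.alphaC_pos k).le (pow_nonneg S.hr.1.le _)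
  rw [mul_comm _ Λ]
  refine mul_le_mul_of_nonneg_left ?_ hf.1
  calc 1 - exp (-(b * S.r ^ j)) * (1 - S.alphaC k * S.r ^ (l + j))
      = (1 - exp (-(b * S.r ^ j))) + exp (-(b * S.r ^ j)) * (S.alphaC k * S.r ^ (l + j)) := by
        ring
    _ ≤ b * S.r ^ j + S.r ^ j :=
        add_le_add hexp ((mul_le_of_le_one_left hαr hexp_le_one).trans hpow)
    _ = (b + 1) * S.r ^ j := by ring
    _ ≤ S.β * S.alphaC (k + l) * S.r ^ j := mul_le_mul_of_nonneg_right hB hrj.le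
    _ = S.β * (S.alphaC (k + l) * S.r ^ j) := mul_assoc _ _ _

theorem ruelleIter_lconst (hf : S.IsDbarLipschitz k Λ f) :
    S.IsDbarLipschitz (k + S.lconst k) (S.tconst k * Λ)
      (RuelleIter S.W S.A S.φ k (S.lconst k) f) := by
  have ht : 0 ≤ S.tconst k := S.hβ.1.le.trans (le_max_left _ _)
  refine ⟨mul_nonneg ht hf.1, fun x hx y hy => ?_⟩
  rcases eq_or_ne x y with rfl | hne
  · rw [sub_self]
    exact mul_nonneg (mul_nonneg ht hf.1) (S.dbar_nonneg _ x x)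
  obtain ⟨j, hxy, hdr⟩ := exists_agrees_and_dr_eq_pow S.r hne
  rw [dbar, hdr]
  rcases le_or_gt 1 (S.alphaC (k + S.lconst k) * S.r ^ j) with hfar | hnear
  · rw [min_eq_left hfar, mul_one]
    exact (hf.ruelleIter_lconst_sub_le hx hy).trans
      (mul_le_mul_of_nonneg_right (le_max_right _ _) hf.1)
  · have hj : 1 ≤ j := by
      refine Nat.one_le_iff_ne_zero.2 fun h0 => hnear.not_ge ?_
      simpa [h0] using S.one_le_alphaC (k + S.lconst k)
    rw [min_eq_right hnear.le, mul_right_comm]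
    refine (hf.ruelleIter_lconst_sub_le_of_agrees hj hx hy hxy).trans
      (mul_le_mul_of_nonneg_right (mul_le_mul_of_nonneg_right (le_max_left _ _) ?_) hf.1)
    exact mul_nonneg (S.alphaC_pos _).le (pow_nonneg S.hr.1.le j)

theorem eventually_ruelleIter_sub_le_pow_mul (hf : S.IsDbarLipschitz k Λ f) {t : ℝ}
    (ht : ∀ k, S.tconst k ≤ t) (j : ℕ) :
    ∀ᶠ n in atTop, ∀ x ∈ Sig S.W S.A (k + n), ∀ y ∈ Sig S.W S.A (k + n),
      RuelleIter S.W S.A S.φ k n f x - RuelleIter S.W S.A S.φ k n f y ≤ t ^ j * Λ := by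
  induction j generalizing k Λ f with
  | zero =>
    obtain ⟨a, ha⟩ := hf.exists_mapsTo_Icc
    refine .of_forall fun n x hx y hy => ?_
    linarith [(mapsTo_ruelleIter S.isNormalized ha n hx).2,
      (mapsTo_ruelleIter S.isNormalized ha n hy).1]
  | succ j ih =>
    have hstep := hf.ruelleIter_lconst.mono (mul_le_mul_of_nonneg_right (ht k) hf.1)
    filter_upwards [(tendsto_sub_atTop_nat (S.lconst k)).eventually (ih hstep),
      eventually_ge_atTop (S.lconst k)] with n hn hle
    rwa [← ruelleIter_add, Nat.add_assoc, Nat.add_sub_cancel' hle, ← mul_assoc, ← pow_succ] at hn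

theorem eventually_ruelleIter_sub_le (hf : S.IsDbarLipschitz k Λ f)
    (ht : ∃ t < 1, ∀ k, S.tconst k ≤ t) {ε : ℝ} (hε : 0 < ε) :
    ∀ᶠ n in atTop, ∀ x ∈ Sig S.W S.A (k + n), ∀ y ∈ Sig S.W S.A (k + n),
      RuelleIter S.W S.A S.φ k n f x - RuelleIter S.W S.A S.φ k n f y ≤ ε := by
  obtain ⟨t, ht1, htk⟩ := ht
  have ht0 : 0 ≤ t := S.hβ.1.le.trans ((le_max_left _ _).trans (htk 0))
  have hlim : Tendsto (fun j : ℕ => t ^ j * Λ) atTop (nhds 0) := by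
    simpa using (tendsto_pow_atTop_nhds_zero_of_lt_one ht0 ht1).mul_const Λ
  obtain ⟨j, hj⟩ := (hlim.eventually_le_const hε).exists
  filter_upwards [hf.eventually_ruelleIter_sub_le_pow_mul htk j] with n hn x hx y hy
  exact (hn x hx y hy).trans hj

end IsDbarLipschitz

end HstarSystem

/-- (Corollary, convergence.) Under property `(H*)`, if there is an invariant
sequence `(μ_k)` of Borel probability measures and the `n_k` are chosen so that
`sup_k t_k < 1`, then for every Lipschitz function `f : Σ_k → ℝ` (with respect to `d_r`) one
has `‖ℒ^n_k(f) − ∫ f dμ_k‖_∞ → 0` as `n → ∞`. -/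
theorem ruelle_iter_converges_to_integral (S : HstarSystem)
    (ht : ∃ t : ℝ, t < 1 ∧ ∀ k, S.tconst k ≤ t)
    (μ : ℕ → Measure Seq)
    (hμp : ∀ k, IsProbabilityMeasure (μ k)) (hμs : ∀ k, μ k (Sig S.W S.A k) = 1)
    (hμinv : ∀ k, dualRuelle S.W S.A S.φ k (μ (k + 1)) = μ k)
    (k : ℕ) (f : Seq → ℝ) (hfm : Measurable f)
    (hf : ∃ K : ℝ, 0 ≤ K ∧ ∀ x ∈ Sig S.W S.A k, ∀ y ∈ Sig S.W S.A k,
      |f x - f y| ≤ K * dr S.r x y) :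
    Filter.Tendsto
      (fun n => sSup {t : ℝ | ∃ x ∈ Sig S.W S.A (k + n),
        t = |RuelleIter S.W S.A S.φ k n f x - ∫ y, f y ∂(μ k)|})
      Filter.atTop (nhds 0) := by
  obtain ⟨K, hK, hfK⟩ := hf
  have hLip : S.IsDbarLipschitz k K f :=
    HstarSystem.isDbarLipschitz_of_abs_sub_le_mul_dr hK hfK
  obtain ⟨a, hfa⟩ := hLip.exists_mapsTo_Icc
  refine tendsto_sSup_abs_nhds_zero fun ε hε => ?_
  filter_upwards [hLip.eventually_ruelleIter_sub_le ht hε] with n hn x hx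
  have hint := integrable_of_mapsTo (hμs (k + n))
    (measurable_ruelleIter S.measurable_weight hfm n) (mapsTo_ruelleIter S.isNormalized hfa n)
  rw [← integral_ruelleIter hμs hμinv S.isNormalized S.measurable_weight hfm hfa n]
  exact abs_sub_integral_le (hμs (k + n)) hint hn hx

end NSShift
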